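/- Let f : ℝ → ℝ be bounded and regulated, and satisfy the no-jamming condition. If xₙ : [0,∞) → ℝ is a sequence of Carathéodory solutions of ẋ = f(x) which converges to a function x̄ uniformly on every bounded subset of [0,∞), then x̄ is also a Carathéodory solution of ẋ = f(x). In other words, the set of Carathéodory solutions is closed with respect to uniform convergence on bounded sets. -/

import Mathlib

open MeasureTheory Set Filter

/-- `f` is regulated with left limits `fl` and right limits `fr`. -/
def Regulated (f fl fr : ℝ → ℝ) : Prop :=
  ∀ y : ℝ,
    Filter.Tendsto f (nhdsWithin y (Set.Iio y)) (nhds (fl y)) ∧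
    Filter.Tendsto f (nhdsWithin y (Set.Ioi y)) (nhds (fr y))

/-- The no-jamming condition: if `f(y−)·f(y+) = 0` or `f(y−) > 0 > f(y+)`, then `f(y) = 0`. -/
def NoJamming (f fl fr : ℝ → ℝ) : Prop :=
  ∀ y : ℝ, (fl y * fr y = 0 ∨ (0 < fl y ∧ fr y < 0)) → f y = 0

open Topology in
lemma countable_of_punctured (S : Set ℝ) (h : ∀ x ∈ S, ∀ᶠ z in 𝓝[≠] x, z ∉ S) :
    S.Countable := by
  refine (countable_setOfPred_isolated_right_within (s := S)).mono ?_
  intro x hx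
  refine ⟨hx, ?_⟩
  have h1 := h x hx
  rw [← Filter.empty_mem_iff_bot, mem_nhdsWithin_iff_eventually]
  rw [eventually_nhdsWithin_iff] at h1
  filter_upwards [h1] with z hz hz2
  exact absurd hz2.1 (hz (ne_of_gt hz2.2))

open Topology in
lemma regulated_countable {f fl fr : ℝ → ℝ} (hreg : Regulated f fl fr) :
    {y | ¬ ContinuousAt f y}.Countable := by
  have hsub : {y | ¬ ContinuousAt f y} ⊆
      ⋃ n : ℕ, {y | ¬ ∀ᶠ z in 𝓝 y, |f z - f y| < 1 / ((n : ℝ) + 1)} := by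
    intro y hy
    by_contra hcon
    simp only [mem_iUnion, mem_ofPred_eq, not_exists, not_not] at hcon
    apply hy
    rw [Metric.continuousAt_iff']
    intro ε hε
    obtain ⟨n, hn⟩ := exists_nat_one_div_lt hε
    filter_upwards [hcon n] with z hz
    rw [Real.dist_eq]
    exact hz.trans hn
  refine Set.Countable.mono hsub (countable_iUnion fun n => countable_of_punctured _ ?_)
  intro y0 _
  set q : ℝ := 1 / ((n : ℝ) + 1) with hq
  have hqp : 0 < q := by positivity
  have key : ∀ (s : Set ℝ) (l : ℝ), IsOpen s → Tendsto f (𝓝[s] y0) (𝓝 l) →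
      ∀ᶠ y in 𝓝[s] y0, ∀ᶠ z in 𝓝 y, |f z - f y| < q := by
    intro s l hs hl
    have h1 : ∀ᶠ z in 𝓝[s] y0, |f z - l| < q / 2 := by
      have := (Metric.tendsto_nhds.1 hl) (q / 2) (by positivity)
      simpa [Real.dist_eq] using this
    have h2 := eventually_eventually_nhdsWithin.2 h1
    filter_upwards [h1, h2, self_mem_nhdsWithin] with y hy1 hy2 hys
    rw [hs.nhdsWithin_eq hys] at hy2
    filter_upwards [hy2] with z hz
    rw [abs_lt] at *
    constructor <;> linarith
  have e : (𝓝[≠] y0) = 𝓝[<] y0 ⊔ 𝓝[>] y0 := by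
    rw [← nhdsWithin_union, Iio_union_Ioi]
  rw [e, eventually_sup]
  constructor
  · filter_upwards [key _ _ isOpen_Iio (hreg y0).1] with y hy
    simpa using hy
  · filter_upwards [key _ _ isOpen_Ioi (hreg y0).2] with y hy
    simpa using hy

lemma regulated_measurable {f fl fr : ℝ → ℝ} (hreg : Regulated f fl fr) : Measurable f := by
  refine measurable_of_isOpen fun U hU => ?_
  have h : f ⁻¹' U = interior (f ⁻¹' U) ∪ ((f ⁻¹' U) \ interior (f ⁻¹' U)) := by
    rw [union_sdiff_cancel interior_subset]
  rw [h]
  refine isOpen_interior.measurableSet.union (Set.Countable.measurableSet ?_)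
  refine (regulated_countable hreg).mono ?_
  rintro y ⟨hy1, hy2⟩ hc
  exact hy2 (mem_interior_iff_mem_nhds.2 (hc (hU.mem_nhds hy1)))

/-- Growth from an a.e. lower bound on the derivative. -/
lemma growth {g : ℝ → ℝ} {K : NNReal} (hg : LipschitzWith K g) {a b c : ℝ} (hab : a ≤ b)
    (h : ∀ᵐ s, s ∈ Icc a b → ∃ d, HasDerivAt g d s ∧ c ≤ d) :
    c * (b - a) ≤ g b - g a := by
  have hac : AbsolutelyContinuousOnInterval g a b :=
    hg.lipschitzOnWith.absolutelyContinuousOnInterval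
  rw [← hac.integral_deriv_eq_sub]
  have : c * (b - a) = ∫ _ in a..b, c := by simp [mul_comm]
  rw [this]
  refine intervalIntegral.integral_mono_ae_restrict hab (by simp) hac.intervalIntegrable_deriv ?_
  rw [Filter.EventuallyLE, ae_restrict_iff' measurableSet_Icc]
  filter_upwards [h] with s hs hs2
  obtain ⟨d, hd, hcd⟩ := hs hs2
  rwa [hd.deriv]

/-- Points at a given level with nonzero derivative are countable. -/
lemma level_countable (g : ℝ → ℝ) (y : ℝ) :
    {t | g t = y ∧ ∃ d, HasDerivAt g d t ∧ d ≠ 0}.Countable := by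
  refine countable_of_punctured _ ?_
  rintro t ⟨hy, d, hd, hd0⟩
  filter_upwards [hd.eventually_ne (c := y) hd0] with z hz hz2
  exact hz hz2.1

open Topology in
lemma key_growth {f : ℝ → ℝ} {K : NNReal} {X : ℕ → ℝ → ℝ} {W : ℝ → ℝ}
    (hX : ∀ n, LipschitzWith K (X n))
    (hd : ∀ n, ∀ᵐ t, 0 < t → HasDerivAt (X n) (f (X n t)) t)
    (hlim : ∀ t, Tendsto (fun n => X n t) atTop (𝓝 (W t)))
    {t : ℝ} (ht : 0 < t) {φ : ℝ → ℝ} {L : NNReal} (hφ : LipschitzWith L φ) {c : ℝ}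
    (hc : ∀ᶠ z in 𝓝 (W t), (z = W t ∧ f z ≠ 0) ∨ ∃ p, HasDerivAt φ p z ∧ c ≤ p * f z) :
    ∀ᶠ u in 𝓝[>] t, c * (u - t) ≤ φ (W u) - φ (W t) := by
  obtain ⟨δ, hδ, hball⟩ := Metric.eventually_nhds_iff.1 hc
  have hu : ∀ᶠ u in 𝓝[>] t, K * (u - t) < δ / 2 := by
    have : Tendsto (fun u => (K : ℝ) * (u - t)) (𝓝[>] t) (𝓝 ((K : ℝ) * (t - t))) :=
      (Continuous.tendsto (by fun_prop) t).mono_left nhdsWithin_le_nhds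
    refine this.eventually_lt_const ?_
    simpa using hδ
  filter_upwards [hu, self_mem_nhdsWithin] with u hu htu
  have htu : t < u := htu
  have hl : Tendsto (fun n => φ (X n u) - φ (X n t)) atTop (𝓝 (φ (W u) - φ (W t))) :=
    ((hφ.continuous.tendsto _).comp (hlim u)).sub ((hφ.continuous.tendsto _).comp (hlim t))
  refine ge_of_tendsto hl ?_
  filter_upwards [(Metric.tendsto_nhds.1 (hlim t)) (δ / 2) (by positivity)] with n hn
  refine growth (g := fun s => φ (X n s)) (hφ.comp (hX n)) htu.le ?_
  have hcount := (level_countable (X n) (W t)).ae_notMem volume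
  filter_upwards [hd n, hcount] with s hs hs2 hsI
  have hs := hs (ht.trans_le hsI.1)
  have h1 : dist (X n s) (W t) < δ := by
    have := (hX n).dist_le_mul s t
    have h2 : dist s t ≤ u - t := by
      rw [Real.dist_eq, abs_of_nonneg (by linarith [hsI.1])]; linarith [hsI.2]
    have h3 : (K : ℝ) * dist s t ≤ K * (u - t) := by gcongr
    linarith [dist_triangle (X n s) (X n t) (W t)]
  rcases hball h1 with ⟨e, hne⟩ | ⟨p, hp, hcp⟩
  · exact absurd ⟨e, _, hs, hne⟩ hs2
  · exact ⟨_, hp.comp s hs, hcp⟩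

open Topology in
lemma le_deriv_of_growth {g : ℝ → ℝ} {v c t : ℝ} (hg : HasDerivAt g v t)
    (h : ∀ᶠ u in 𝓝[>] t, c * (u - t) ≤ g u - g t) : c ≤ v := by
  have h1 := (hasDerivAt_iff_tendsto_slope_left_right.1 hg).2
  refine ge_of_tendsto h1 ?_
  filter_upwards [h, self_mem_nhdsWithin] with u hu htu
  have htu : t < u := htu
  rw [slope_def_field, le_div_iff₀ (by linarith)]
  exact hu

open Topology in
lemma deriv_eq_of_limit {f fl fr : ℝ → ℝ} (hreg : Regulated f fl fr) (hnj : NoJamming f fl fr)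
    {K : NNReal} {X : ℕ → ℝ → ℝ} {W : ℝ → ℝ}
    (hX : ∀ n, LipschitzWith K (X n))
    (hd : ∀ n, ∀ᵐ t, 0 < t → HasDerivAt (X n) (f (X n t)) t)
    (hlim : ∀ t, Tendsto (fun n => X n t) atTop (𝓝 (W t)))
    {t v : ℝ} (ht : 0 < t) (hv : HasDerivAt W v t) (hcont : v ≠ 0 → ContinuousAt f (W t)) :
    v = f (W t) := by
  have hid : LipschitzWith 1 (fun z : ℝ => z) := LipschitzWith.id
  have hneg : LipschitzWith 1 (fun z : ℝ => -z) := LipschitzWith.id.neg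
  have habs : LipschitzWith 1 (fun z : ℝ => |z - W t|) := by
    refine LipschitzWith.of_dist_le_mul fun a b => ?_
    rw [Real.dist_eq, Real.dist_eq]
    have := abs_abs_sub_abs_le_abs_sub (a - W t) (b - W t)
    simpa using this
  have low : ∀ c, (∀ᶠ z in 𝓝 (W t), (z = W t ∧ f z ≠ 0) ∨ c ≤ f z) → c ≤ v := by
    intro c hc
    refine le_deriv_of_growth hv (key_growth hX hd hlim ht hid ?_)
    filter_upwards [hc] with z hz
    exact hz.imp id fun h => ⟨1, hasDerivAt_id z, by simpa using h⟩
  have up : ∀ c, (∀ᶠ z in 𝓝 (W t), (z = W t ∧ f z ≠ 0) ∨ c ≤ - f z) → c ≤ -v := by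
    intro c hc
    refine le_deriv_of_growth (g := fun u => - W u) hv.neg
      (key_growth hX hd hlim ht hneg ?_)
    filter_upwards [hc] with z hz
    exact hz.imp id fun h => ⟨-1, hasDerivAt_neg z, by simpa using h⟩
  by_cases hfc : ContinuousAt f (W t)
  · apply le_antisymm
    · refine le_of_forall_gt_imp_ge_of_dense fun c hc => ?_
      have := up (-c) ?_
      · linarith
      · filter_upwards [hfc.eventually_lt_const hc] with z hz
        right; linarith
    · refine le_of_forall_lt_imp_le_of_dense fun c hc => ?_
      refine low c ?_
      filter_upwards [hfc.eventually_const_lt hc] with z hz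
      right; linarith
  have hv0 : v = 0 := by
    by_contra h
    exact hfc (hcont h)
  subst hv0
  by_contra hf0
  have hf0 : f (W t) ≠ 0 := fun h => hf0 h.symm
  have hnot := mt (hnj (W t)) hf0
  push Not at hnot
  obtain ⟨hprod, hnj2⟩ := hnot
  have hl0 : fl (W t) ≠ 0 := left_ne_zero_of_mul hprod
  have hr0 : fr (W t) ≠ 0 := right_ne_zero_of_mul hprod
  have glue : ∀ P : ℝ → Prop, (∀ᶠ z in 𝓝[<] (W t), P z) → (∀ᶠ z in 𝓝[>] (W t), P z) →
      ∀ᶠ z in 𝓝 (W t), (z = W t ∧ f z ≠ 0) ∨ P z := by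
    intro P h1 h2
    rw [eventually_nhdsWithin_iff] at h1 h2
    filter_upwards [h1, h2] with z hz1 hz2
    rcases lt_trichotomy z (W t) with h | h | h
    · exact Or.inr (hz1 h)
    · left; exact ⟨h, by rwa [h]⟩
    · exact Or.inr (hz2 h)
  obtain ⟨hL, hR⟩ := hreg (W t)
  rcases lt_or_gt_of_ne hl0 with hl | hl
  · rcases lt_or_gt_of_ne hr0 with hr | hr
    · set c := min (-fl (W t)) (-fr (W t)) / 2 with hc
      have hm : 0 < min (-fl (W t)) (-fr (W t)) := lt_min (by linarith) (by linarith)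
      have h1 := min_le_left (-fl (W t)) (-fr (W t))
      have h2 := min_le_right (-fl (W t)) (-fr (W t))
      have := up c (glue _ ?_ ?_)
      · linarith
      · filter_upwards [hL.eventually_lt_const (show fl (W t) < -c by linarith)] with z hz
        linarith
      · filter_upwards [hR.eventually_lt_const (show fr (W t) < -c by linarith)] with z hz
        linarith
    · set c := min (-fl (W t)) (fr (W t)) / 2 with hc
      have hm : 0 < min (-fl (W t)) (fr (W t)) := lt_min (by linarith) (by linarith)
      have h1 := min_le_left (-fl (W t)) (fr (W t))
      have h2 := min_le_right (-fl (W t)) (fr (W t))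
      have hder : HasDerivAt (fun u => |W u - W t|) 0 t := by
        rw [hasDerivAt_iff_isLittleO] at hv ⊢
        simp only [sub_self, abs_zero, sub_zero, smul_zero] at hv ⊢
        exact hv.norm_left
      have := le_deriv_of_growth (c := c) hder (key_growth hX hd hlim ht habs (glue _ ?_ ?_))
      · linarith
      · filter_upwards [hL.eventually_lt_const (show fl (W t) < -c by linarith),
          self_mem_nhdsWithin] with z hz hzl
        have hzl : z < W t := hzl
        refine ⟨-1, ?_, by linarith⟩
        have h3 : HasDerivAt (fun z => -(z - W t)) (-1) z := ((hasDerivAt_id z).sub_const _).neg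
        refine h3.congr_of_eventuallyEq ?_
        filter_upwards [Iio_mem_nhds hzl] with w hw
        exact abs_of_neg (sub_neg.2 hw)
      · filter_upwards [hR.eventually_const_lt (show c < fr (W t) by linarith),
          self_mem_nhdsWithin] with z hz hzl
        have hzl : W t < z := hzl
        refine ⟨1, ?_, by linarith⟩
        have h3 : HasDerivAt (fun z => (z - W t)) 1 z := ((hasDerivAt_id z).sub_const _)
        refine h3.congr_of_eventuallyEq ?_
        filter_upwards [Ioi_mem_nhds hzl] with w hw
        exact abs_of_pos (sub_pos.2 hw)
  · have hr : 0 < fr (W t) := lt_of_le_of_ne (hnj2 hl) hr0.symm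
    set c := min (fl (W t)) (fr (W t)) / 2 with hc
    have hm : 0 < min (fl (W t)) (fr (W t)) := lt_min hl hr
    have h1 := min_le_left (fl (W t)) (fr (W t))
    have h2 := min_le_right (fl (W t)) (fr (W t))
    have := low c (glue _ ?_ ?_)
    · linarith
    · filter_upwards [hL.eventually_const_lt (show c < fl (W t) by linarith)] with z hz
      linarith
    · filter_upwards [hR.eventually_const_lt (show c < fr (W t) by linarith)] with z hz
      linarith

open Topology in
lemma solution_props {f : ℝ → ℝ} {M : ℝ} (hb : ∀ y, |f y| ≤ M) (hf : Measurable f)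
    {x : ℝ → ℝ} (hx : ∀ t : ℝ, 0 ≤ t → x t = x 0 + ∫ s in (0:ℝ)..t, f (x s)) :
    LipschitzWith M.toNNReal (fun t => x (max t 0)) ∧
    ∀ᵐ t, 0 < t → HasDerivAt (fun t => x (max t 0)) (f (x (max t 0))) t := by
  classical
  have hM : 0 ≤ M := (abs_nonneg _).trans (hb 0)
  have hcoe : (M.toNNReal : ℝ) = M := Real.coe_toNNReal _ hM
  set S : Set ℝ := {t | 0 ≤ t ∧ IntervalIntegrable (fun s => f (x s)) volume 0 t} with hS
  have hSo : S.OrdConnected := by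
    refine ⟨fun a ha b hb' u hu => ⟨ha.1.trans hu.1, hb'.2.mono_set ?_⟩⟩
    rw [uIcc_of_le (ha.1.trans hu.1), uIcc_of_le hb'.1]
    exact Icc_subset_Icc_right hu.2
  have hSm : MeasurableSet S := hSo.measurableSet
  have hbound : ∀ g : ℝ → ℝ, ∀ a b : ℝ, |∫ s in a..b, f (g s)| ≤ M * |b - a| := by
    intro g a b
    have h : ‖∫ s in a..b, f (g s)‖ ≤ M * |b - a| :=
      intervalIntegral.norm_integral_le_of_norm_le_const fun s _ => hb (g s)
    exact h
  have hprim : ContinuousOn (fun t => x 0 + ∫ s in (0:ℝ)..t, f (x s)) S := by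
    refine LipschitzOnWith.continuousOn (K := M.toNNReal) ?_
    refine LipschitzOnWith.of_dist_le_mul fun a ha b hb' => ?_
    rw [Real.dist_eq, Real.dist_eq, hcoe, add_sub_add_left_eq_sub,
      intervalIntegral.integral_interval_sub_left ha.2 hb'.2]
    exact hbound _ _ _
  have hXm : Measurable (fun t => x (max t 0)) := by
    have h := hprim.measurable_piecewise (g := fun _ => x 0) continuousOn_const hSm
    convert h using 1
    funext t
    by_cases htS : t ∈ S
    · rw [Set.piecewise_eq_of_mem _ _ _ htS, max_eq_left htS.1]
      exact hx t htS.1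
    · rw [Set.piecewise_eq_of_notMem _ _ _ htS]
      rcases le_total t 0 with h0 | h0
      · rw [max_eq_right h0]
      · rw [max_eq_left h0, hx t h0, intervalIntegral.integral_undef, add_zero]
        exact fun h => htS ⟨h0, h⟩
  have hloc : LocallyIntegrable (fun t => f (x (max t 0))) volume := by
    have hc : LocallyIntegrable (fun _ : ℝ => M) volume := locallyIntegrable_const M
    refine hc.mono (hf.comp hXm).aestronglyMeasurable (Eventually.of_forall fun t => ?_)
    rw [Real.norm_eq_abs, Real.norm_eq_abs, abs_of_nonneg hM]
    exact hb _
  have hint : ∀ a b, IntervalIntegrable (fun t => f (x (max t 0))) volume a b := fun a b =>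
    intervalIntegrable_iff.mpr <|
      (hloc.integrableOn_isCompact isCompact_uIcc).mono_set uIoc_subset_uIcc
  have hY : ∀ t, 0 ≤ t → x t = x 0 + ∫ s in (0:ℝ)..t, f (x (max s 0)) := by
    intro t ht
    rw [hx t ht]
    congr 1
    refine intervalIntegral.integral_congr fun s hs => ?_
    rw [uIcc_of_le ht] at hs
    simp only [max_eq_left hs.1]
  constructor
  · refine LipschitzWith.of_dist_le_mul fun a b => ?_
    rw [Real.dist_eq, Real.dist_eq, hcoe, hY _ (le_max_right a 0), hY _ (le_max_right b 0),
      add_sub_add_left_eq_sub, intervalIntegral.integral_interval_sub_left (hint _ _) (hint _ _)]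
    refine (hbound (fun s => x (max s 0)) _ _).trans ?_
    exact mul_le_mul_of_nonneg_left (abs_max_sub_max_le_abs a b 0) hM
  · filter_upwards [_root_.LocallyIntegrable.ae_hasDerivAt_integral hloc] with t ht ht0
    refine ((ht 0).const_add (x 0)).congr_of_eventuallyEq ?_
    filter_upwards [Ioi_mem_nhds ht0] with u hu
    have hu : 0 < u := hu
    rw [max_eq_left hu.le]
    exact hY u hu.le

/-- The set of Carathéodory solutions of `ẋ = f(x)` is closed under uniform
convergence on bounded sets. -/
theorem caratheodory_solutions_closed
    (f : ℝ → ℝ) (M : ℝ) (hb : ∀ y : ℝ, |f y| ≤ M)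
    (fl fr : ℝ → ℝ) (hreg : Regulated f fl fr) (hnj : NoJamming f fl fr)
    (xn : ℕ → ℝ → ℝ)
    (hsol : ∀ n : ℕ, ∀ t : ℝ, 0 ≤ t → xn n t = xn n 0 + ∫ s in (0:ℝ)..t, f (xn n s))
    (xbar : ℝ → ℝ)
    (hconv : ∀ R : ℝ, 0 < R → TendstoUniformlyOn xn xbar Filter.atTop (Set.Icc 0 R)) :
    ∀ t : ℝ, 0 ≤ t → xbar t = xbar 0 + ∫ s in (0:ℝ)..t, f (xbar s) := by
  have hf := regulated_measurable hreg
  have hM : 0 ≤ M := (abs_nonneg _).trans (hb 0)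
  have hlim : ∀ t, Tendsto (fun n => xn n (max t 0)) atTop (nhds (xbar (max t 0))) := by
    intro t
    have h0 : 0 ≤ max t 0 := le_max_right _ _
    exact (hconv (max t 0 + 1) (by linarith)).tendsto_at ⟨h0, by linarith⟩
  have hX := fun n => (solution_props hb hf (hsol n)).1
  have hd := fun n => (solution_props hb hf (hsol n)).2
  set W : ℝ → ℝ := fun t => xbar (max t 0) with hW
  have hWL : LipschitzWith M.toNNReal W := by
    refine LipschitzWith.of_dist_le_mul fun a b => ?_
    exact le_of_tendsto ((hlim a).dist (hlim b))
      (Eventually.of_forall fun n => (hX n).dist_le_mul a b)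
  have hcount : (⋃ y ∈ {y | ¬ ContinuousAt f y},
      {t | W t = y ∧ ∃ d, HasDerivAt W d t ∧ d ≠ 0}).Countable :=
    (regulated_countable hreg).biUnion fun y _ => level_countable W y
  have hae : ∀ᵐ t, 0 < t → deriv W t = f (W t) := by
    filter_upwards [hWL.ae_differentiableAt_real, hcount.ae_notMem volume] with t ht1 ht2 ht0
    refine deriv_eq_of_limit hreg hnj hX hd hlim ht0 ht1.hasDerivAt fun hv => ?_
    by_contra hc
    exact ht2 (mem_biUnion (x := W t) hc ⟨rfl, _, ht1.hasDerivAt, hv⟩)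
  intro t ht
  have hac : AbsolutelyContinuousOnInterval W 0 t :=
    hWL.lipschitzOnWith.absolutelyContinuousOnInterval
  have h1 := hac.integral_deriv_eq_sub
  have h2 : ∫ s in (0:ℝ)..t, deriv W s = ∫ s in (0:ℝ)..t, f (xbar s) := by
    refine intervalIntegral.integral_congr_ae ?_
    filter_upwards [hae] with s hs hst
    rw [uIoc_of_le ht] at hst
    rw [hs hst.1]
    simp only [hW, max_eq_left hst.1.le]
  rw [h2] at h1
  simp only [hW, max_eq_left ht, max_self] at h1
  linarith
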